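/- Let S be a Polish metric space and let P be an asymptotically stable Markov-Feller operator on S with invariant probability measure μ*. Then for every k ∈ ℕ, k ≥ 1, the set O_k = { x ∈ S : there exist an open neighbourhood O of x and N ∈ ℕ such that for all n ≥ N and all y ∈ O, d_FM(Pⁿδ_y, μ*) ≤ 1/k } is an open and dense subset of S. -/

import Mathlib

open MeasureTheory ProbabilityTheory Filter Topology

/-- The `n`-step evolution of a measure under the Markov operator generated by the
transition kernel `κ`: `P⁰μ = μ`, `Pⁿ⁺¹μ = (Pⁿμ).bind κ`. -/
noncomputable def kIter {S : Type*} [MeasurableSpace S] (κ : ProbabilityTheory.Kernel S S) :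
    ℕ → Measure S → Measure S
  | 0, μ => μ
  | n + 1, μ => (kIter κ n μ).bind (fun x => κ x)

/-- The `n`-th iterate of the dual operator: `Uⁿf(x) = ∫ f d(Pⁿδₓ)`. -/
noncomputable def kDual {S : Type*} [MeasurableSpace S] (κ : ProbabilityTheory.Kernel S S)
    (n : ℕ) (f : S → ℝ) (x : S) : ℝ :=
  ∫ y, f y ∂(kIter κ n (Measure.dirac x))

/-- A real-valued function is bounded. -/
def IsBddFun {S : Type*} (f : S → ℝ) : Prop := ∃ C : ℝ, ∀ x, |f x| ≤ C

/-- The Feller property: the dual operator maps bounded continuous functions to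
continuous functions. -/
def IsFeller {S : Type*} [MeasurableSpace S] [TopologicalSpace S]
    (κ : ProbabilityTheory.Kernel S S) : Prop :=
  ∀ f : S → ℝ, Continuous f → IsBddFun f → Continuous (fun x => ∫ y, f y ∂(κ x))

/-- Asymptotic stability: `μst` is an invariant probability measure and `Pⁿμ → μst`
weakly for every Borel probability measure `μ`. -/
def IsAsympStable {S : Type*} [MeasurableSpace S] [TopologicalSpace S]
    (κ : ProbabilityTheory.Kernel S S) (μst : Measure S) : Prop :=
  IsProbabilityMeasure μst ∧ kIter κ 1 μst = μst ∧
    ∀ μ : Measure S, IsProbabilityMeasure μ → ∀ f : S → ℝ, Continuous f → IsBddFun f →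
      Tendsto (fun n => ∫ x, f x ∂(kIter κ n μ)) atTop (𝓝 (∫ x, f x ∂μst))

/-- The Fortet–Mourier distance of two finite Borel measures: the supremum of
`|∫ f dμ − ∫ f dν|` over all 1-Lipschitz functions `f : S → [0,1]`. -/
noncomputable def dFM {S : Type*} [MeasurableSpace S] [PseudoMetricSpace S]
    (μ ν : Measure S) : ℝ :=
  ⨆ f : {f : S → ℝ // LipschitzWith 1 f ∧ ∀ x, f x ∈ Set.Icc (0 : ℝ) 1},
    |∫ x, f.1 x ∂μ - ∫ x, f.1 x ∂ν|

/-- The open set `O_k` of points having a neighbourhood on which, from some time on, all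
`n`-step distributions are `1/k`-close to the invariant measure in Fortet–Mourier distance. -/
def Ok {S : Type*} [MeasurableSpace S] [MetricSpace S]
    (κ : ProbabilityTheory.Kernel S S) (μst : Measure S) (k : ℕ) : Set S :=
  {x : S | ∃ O : Set S, IsOpen O ∧ x ∈ O ∧ ∃ N : ℕ, ∀ n ≥ N, ∀ y ∈ O,
    dFM (kIter κ n (Measure.dirac y)) μst ≤ 1 / (k : ℝ)}

instance isProbabilityMeasure_kIter {S : Type*} [MeasurableSpace S] (κ : Kernel S S)
    [IsMarkovKernel κ] (n : ℕ) (μ : Measure S) [hμ : IsProbabilityMeasure μ] :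
    IsProbabilityMeasure (kIter κ n μ) := by
  induction n with
  | zero => exact hμ
  | succ n ih =>
    exact isProbabilityMeasure_bind κ.measurable.aemeasurable
      (Eventually.of_forall fun x => inferInstanceAs (IsProbabilityMeasure (κ x)))

/-- The dual operator of a Markov kernel preserves bounds. -/
theorem abs_integral_kernel_le {S : Type*} [MeasurableSpace S] (κ : Kernel S S)
    [IsMarkovKernel κ] {f : S → ℝ} {C : ℝ} (hC : ∀ x, |f x| ≤ C) (x : S) :
    |∫ y, f y ∂(κ x)| ≤ C := by
  simpa using norm_integral_le_of_norm_le_const (μ := κ x) (f := f) (C := C) (Eventually.of_forall hC)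

theorem integral_kIter_succ {S : Type*} [TopologicalSpace S] [MeasurableSpace S]
    [OpensMeasurableSpace S] (κ : Kernel S S) [IsMarkovKernel κ] (n : ℕ) (μ : Measure S)
    [IsProbabilityMeasure μ] {f : S → ℝ} (hf : Continuous f) (hb : IsBddFun f) :
    ∫ y, f y ∂(kIter κ (n + 1) μ) = ∫ x, ∫ y, f y ∂(κ x) ∂(kIter κ n μ) := by
  obtain ⟨C, hC⟩ := hb
  have hf_int : Integrable f (κ ∘ₘ kIter κ n μ) :=
    Integrable.of_bound (μ := kIter κ (n + 1) μ) hf.measurable.aestronglyMeasurable C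
      (Eventually.of_forall hC)
  change ∫ y, f y ∂(κ ∘ₘ kIter κ n μ) = _
  rw [Measure.comp_eq_comp_const_apply] at hf_int ⊢
  rw [Kernel.integral_comp hf_int, Kernel.const_apply]

theorem IsFeller.continuous_kDual {S : Type*} [TopologicalSpace S] [MeasurableSpace S]
    [OpensMeasurableSpace S] {κ : Kernel S S} [IsMarkovKernel κ] (hκ : IsFeller κ) (n : ℕ)
    {f : S → ℝ} (hf : Continuous f) (hb : IsBddFun f) : Continuous (kDual κ n f) := by
  induction n generalizing f with
  | zero =>
    have h : kDual κ 0 f = f :=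
      funext fun x => integral_dirac' f x hf.measurable.stronglyMeasurable
    rwa [h]
  | succ n ih =>
    have h : kDual κ (n + 1) f = kDual κ n (fun x => ∫ y, f y ∂(κ x)) :=
      funext fun x => integral_kIter_succ κ n (Measure.dirac x) hf hb
    obtain ⟨C, hC⟩ := hb
    rw [h]
    exact ih (hκ f hf ⟨C, hC⟩) ⟨C, abs_integral_kernel_le κ hC⟩

/-- The integral of a 1-Lipschitz `[0,1]`-valued function changes by at most `2ε` between
measures whose Lévy–Prokhorov distance is less than `ε`. -/
theorem integral_le_add_of_levyProkhorovEDist_lt {S : Type*} [PseudoMetricSpace S]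
    [MeasurableSpace S] [OpensMeasurableSpace S] {μ ν : Measure S} [IsProbabilityMeasure μ]
    [IsProbabilityMeasure ν] {ε : ℝ} (hε : 0 < ε)
    (h : levyProkhorovEDist μ ν < ENNReal.ofReal ε) {f : S → ℝ} (hf : LipschitzWith 1 f)
    (hf01 : ∀ x, f x ∈ Set.Icc (0 : ℝ) 1) :
    ∫ x, f x ∂μ ≤ ∫ x, f x ∂ν + 2 * ε := by
  have hf_int (ρ : Measure S) [IsProbabilityMeasure ρ] : Integrable f ρ :=
    Integrable.of_mem_Icc 0 1 hf.continuous.measurable.aemeasurable (Eventually.of_forall hf01)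
  have hlevel (ρ : Measure S) [IsProbabilityMeasure ρ] (g : S → ℝ) (a b : ℝ) :
      IntegrableOn (fun t => ρ.real {x | t ≤ g x}) (Set.Ioc a b) := by
    apply Measure.integrableOn_of_bounded (M := 1) measure_Ioc_lt_top.ne
    · apply Measurable.aestronglyMeasurable
      exact Antitone.measurable fun _ _ hst => measureReal_mono fun _ h => hst.trans h
    · exact Eventually.of_forall fun t => by simp [abs_of_nonneg measureReal_nonneg]
  have key (t : ℝ) : μ.real {x | t ≤ f x} ≤ ν.real {x | t ≤ f x + ε} + ε := by
    have hLP := left_measure_le_of_levyProkhorovEDist_lt h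
      (hf.continuous.measurable measurableSet_Ici : MeasurableSet {x | t ≤ f x})
    rw [ENNReal.toReal_ofReal hε.le] at hLP
    have hsub : Metric.thickening ε {x | t ≤ f x} ⊆ {x | t ≤ f x + ε} := by
      intro x hx
      obtain ⟨z, hz, hxz⟩ := Metric.mem_thickening_iff.1 hx
      have h1 := hf.dist_le_mul x z
      rw [Real.dist_eq, NNReal.coe_one, one_mul] at h1
      have h2 := (abs_le.1 h1).1
      simp only [Set.mem_ofPred_eq] at hz ⊢
      linarith
    have h3 := ENNReal.toReal_mono (by finiteness)
      (hLP.trans (add_le_add_left (measure_mono hsub) _))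
    rwa [ENNReal.toReal_add (by finiteness) (by finiteness), ENNReal.toReal_ofReal hε.le] at h3
  calc ∫ x, f x ∂μ = ∫ t in Set.Ioc 0 1, μ.real {x | t ≤ f x} :=
        (hf_int μ).integral_eq_integral_Ioc_meas_le (Eventually.of_forall fun x => (hf01 x).1)
          (Eventually.of_forall fun x => (hf01 x).2)
    _ ≤ ∫ t in Set.Ioc (0 : ℝ) 1, (ν.real {x | t ≤ f x + ε} + ε) :=
        setIntegral_mono (hlevel μ f 0 1) ((hlevel ν _ 0 1).add (integrable_const ε)) key
    _ = (∫ t in Set.Ioc (0 : ℝ) 1, ν.real {x | t ≤ f x + ε}) + ε := by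
        rw [integral_add (hlevel ν _ 0 1) (integrable_const ε)]
        simp
    _ ≤ (∫ t in Set.Ioc (0 : ℝ) (1 + ε), ν.real {x | t ≤ f x + ε}) + ε := by
        gcongr ?_ + ε
        exact setIntegral_mono_set (hlevel ν _ 0 (1 + ε))
          (Eventually.of_forall fun _ => measureReal_nonneg)
          (Set.Ioc_subset_Ioc_right (by linarith)).eventuallyLE
    _ = ∫ x, (f x + ε) ∂ν + ε := by
        have hfε_int : Integrable (fun x => f x + ε) ν := (hf_int ν).add (integrable_const ε)
        rw [hfε_int.integral_eq_integral_Ioc_meas_le (M := 1 + ε)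
          (Eventually.of_forall fun x => add_nonneg (hf01 x).1 hε.le)
          (Eventually.of_forall fun x => add_le_add_left (hf01 x).2 ε)]
    _ = ∫ x, f x ∂ν + 2 * ε := by
        rw [integral_add (hf_int ν) (integrable_const ε)]
        simp
        ring

theorem dFM_le_iff {S : Type*} [PseudoMetricSpace S] [MeasurableSpace S]
    {μ ν : Measure S} [IsProbabilityMeasure μ] [IsProbabilityMeasure ν] {c : ℝ} :
    dFM μ ν ≤ c ↔ ∀ f : S → ℝ, LipschitzWith 1 f → (∀ x, f x ∈ Set.Icc (0 : ℝ) 1) →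
      |∫ x, f x ∂μ - ∫ x, f x ∂ν| ≤ c := by
  have hnonempty : Nonempty {f : S → ℝ // LipschitzWith 1 f ∧ ∀ x, f x ∈ Set.Icc (0 : ℝ) 1} :=
    ⟨⟨fun _ => 0, LipschitzWith.const' 0, fun _ => by simp⟩⟩
  have hbound (ρ : Measure S) [IsProbabilityMeasure ρ] (f : S → ℝ)
      (hf : ∀ x, f x ∈ Set.Icc (0 : ℝ) 1) : |∫ x, f x ∂ρ| ≤ 1 := by
    simpa using norm_integral_le_of_norm_le_const (μ := ρ) (f := f) (C := 1)
      (Eventually.of_forall fun x => abs_le.2 ⟨by linarith [(hf x).1], (hf x).2⟩)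
  have hbdd : BddAbove (Set.range
      fun f : {f : S → ℝ // LipschitzWith 1 f ∧ ∀ x, f x ∈ Set.Icc (0 : ℝ) 1} =>
        |∫ x, f.1 x ∂μ - ∫ x, f.1 x ∂ν|) := by
    refine ⟨1 + 1, ?_⟩
    rintro _ ⟨f, rfl⟩
    exact (abs_sub _ _).trans (add_le_add (hbound μ f.1 f.2.2) (hbound ν f.1 f.2.2))
  rw [dFM, ciSup_le_iff hbdd]
  exact ⟨fun h f hf hf01 => h ⟨f, hf, hf01⟩, fun h f => h f.1 f.2.1 f.2.2⟩

/-- Weak convergence of probability measures on a separable metric space implies convergence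
in the Fortet–Mourier distance. -/
theorem eventually_dFM_le_of_tendsto {S : Type*} [MetricSpace S] [SecondCountableTopology S]
    [MeasurableSpace S] [BorelSpace S] {μs : ℕ → ProbabilityMeasure S}
    {μ : ProbabilityMeasure S} (h : Tendsto μs atTop (𝓝 μ)) {c : ℝ} (hc : 0 < c) :
    ∀ᶠ n in atTop, dFM (μs n : Measure S) μ ≤ c := by
  have hLP := (LevyProkhorov.continuous_ofMeasure_probabilityMeasure.tendsto μ).comp h
  filter_upwards [EMetric.tendsto_nhds.1 hLP (ENNReal.ofReal (c / 2)) (by simpa using hc)]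
    with n hn
  rw [Function.comp_apply, LevyProkhorov.edist_probabilityMeasure_def] at hn
  rw [dFM_le_iff]
  intro f hf hf01
  have h1 := integral_le_add_of_levyProkhorovEDist_lt (half_pos hc) hn hf hf01
  rw [levyProkhorovEDist_comm] at hn
  have h2 := integral_le_add_of_levyProkhorovEDist_lt (half_pos hc) hn hf hf01
  exact abs_le.2 ⟨by linarith, by linarith⟩

theorem IsAsympStable.eventually_dFM_le {S : Type*} [MetricSpace S] [SecondCountableTopology S]
    [MeasurableSpace S] [BorelSpace S] {κ : Kernel S S} [IsMarkovKernel κ] {μst : Measure S}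
    (hstab : IsAsympStable κ μst) (μ : Measure S) [hμ : IsProbabilityMeasure μ] {c : ℝ}
    (hc : 0 < c) : ∀ᶠ n in atTop, dFM (kIter κ n μ) μst ≤ c := by
  let μs : ℕ → ProbabilityMeasure S := fun n => ⟨kIter κ n μ, inferInstance⟩
  let ν : ProbabilityMeasure S := ⟨μst, hstab.1⟩
  have h : Tendsto μs atTop (𝓝 ν) :=
    ProbabilityMeasure.tendsto_iff_forall_integral_tendsto.2 fun f =>
      hstab.2.2 μ hμ f f.continuous ⟨‖f‖, f.norm_coe_le_norm⟩
  exact eventually_dFM_le_of_tendsto h hc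

theorem IsFeller.isClosed_dFM_le {S : Type*} [MetricSpace S] [MeasurableSpace S]
    [OpensMeasurableSpace S] {κ : Kernel S S} [IsMarkovKernel κ] (hκ : IsFeller κ)
    (ν : Measure S) [IsProbabilityMeasure ν] (n : ℕ) (c : ℝ) :
    IsClosed {y | dFM (kIter κ n (Measure.dirac y)) ν ≤ c} := by
  simp only [dFM_le_iff, Set.ofPred_forall]
  refine isClosed_iInter fun f => isClosed_iInter fun hf => isClosed_iInter fun hf01 => ?_
  have hcont : Continuous (kDual κ n f) := hκ.continuous_kDual n hf.continuous
    ⟨1, fun x => abs_le.2 ⟨by linarith [(hf01 x).1], (hf01 x).2⟩⟩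
  exact isClosed_le (hcont.sub continuous_const).abs continuous_const

theorem isOpen_Ok {S : Type*} [MeasurableSpace S] [MetricSpace S] (κ : Kernel S S)
    (μst : Measure S) (k : ℕ) : IsOpen (Ok κ μst k) := by
  refine isOpen_iff_forall_mem_open.2 ?_
  rintro x ⟨O, hO, hxO, N, hN⟩
  exact ⟨O, fun z hz => ⟨O, hO, hz, N, hN⟩, hO, hxO⟩

/-- For an asymptotically stable Markov–Feller operator on a Polish metric space, each set
`O_k` (for `k ≥ 1`) is open and dense. -/
theorem Ok_isOpen_dense
    {S : Type*} [MetricSpace S] [CompleteSpace S] [SecondCountableTopology S]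
    [MeasurableSpace S] [BorelSpace S]
    (κ : ProbabilityTheory.Kernel S S) [IsMarkovKernel κ]
    (hFeller : IsFeller κ) (μst : Measure S) (hstab : IsAsympStable κ μst) :
    ∀ k : ℕ, 1 ≤ k → IsOpen (Ok κ μst k) ∧ Dense (Ok κ μst k) := by
  intro k hk
  refine ⟨isOpen_Ok κ μst k, ?_⟩
  have := hstab.1
  have hk0 : (0 : ℝ) < 1 / k := one_div_pos.2 (by exact_mod_cast hk)
  let Y : ℕ → Set S := fun N =>
    ⋂ n ≥ N, {y | dFM (kIter κ n (Measure.dirac y)) μst ≤ 1 / (k : ℝ)}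
  have hclosed (N : ℕ) : IsClosed (Y N) :=
    isClosed_biInter fun n _ => hFeller.isClosed_dFM_le μst n _
  have hcover : ⋃ N, Y N = Set.univ := by
    refine Set.eq_univ_of_forall fun y => ?_
    obtain ⟨N, hN⟩ := eventually_atTop.1 (hstab.eventually_dFM_le (Measure.dirac y) hk0)
    exact Set.mem_iUnion.2 ⟨N, Set.mem_iInter₂.2 hN⟩
  refine (dense_iUnion_interior_of_closed hclosed hcover).mono (Set.iUnion_subset fun N => ?_)
  exact fun x hx => ⟨interior (Y N), isOpen_interior, hx, N,
    fun n hn y hy => Set.mem_iInter₂.1 (interior_subset hy) n hn⟩
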